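/- Let F(z, w) = (z + (1/2)z²w, w + (1/2)zw²), g(ζ) = ζ·(1 + (1/2)ζ)², Ω_F = {p ∈ ℂ² \ {0} : F^n(p) → 0} and C̃ = {ζ ∈ ℂ \ {0} : g^n(ζ) → 0}. Then the map Φ(z, w) = (z, zw) is a biholomorphism from Ω_F onto ℂ* × C̃, i.e. Φ is injective and holomorphic on Ω_F with holomorphic inverse, and Φ(Ω_F) = ℂ* × C̃; hence Ω_F is biholomorphic to ℂ* × C̃. -/

import Mathlib

/-!
The map `F` multiplies `p = (z, w)` by the scalar `φ(zw)`, where `φ(ζ) = 1 + ζ / 2`. Since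
`(z, w) ↦ zw` is homogeneous of degree two, it semiconjugates `F` to `g(ζ) = φ(ζ)² ζ`, so the same
scalars `cₙ` give `Fⁿ(p) = cₙ p` and `gⁿ(zw) = cₙ² zw`. When `zw ≠ 0`, both orbits tend to `0`
exactly when `cₙ` does; when `zw = 0`, the point `p` is fixed, because `φ(0) = 1`. Hence `Ω_F` is
the preimage of `C̃` under `(z, w) ↦ zw`, so `z ≠ 0` on `Ω_F` and `(z, ζ) ↦ (z, z⁻¹ ζ)` inverts `Φ`.
-/

open Filter Set

/-- The map `F(z, w) = (z + (1/2)z²w, w + (1/2)zw²) = (z, w)·(1 + (1/2)zw)`. -/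
noncomputable def Fex (p : ℂ × ℂ) : ℂ × ℂ :=
  (p.1 + (1 / 2) * p.1 ^ 2 * p.2, p.2 + (1 / 2) * p.1 * p.2 ^ 2)

/-- The one-variable polynomial `g(ζ) = ζ·(1 + (1/2)ζ)²`. -/
noncomputable def gex (ζ : ℂ) : ℂ := ζ * (1 + (1 / 2) * ζ) ^ 2

/-- The basin of attraction `Ω_F = {p ∈ ℂ² \ {0} : F^[n] p → 0}`. -/
noncomputable def basinFex : Set (ℂ × ℂ) :=
  {p | p ≠ 0 ∧ Tendsto (fun n => Fex^[n] p) atTop (nhds 0)}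

/-- The one-variable basin `C̃ = {ζ ∈ ℂ \ {0} : g^[n] ζ → 0}`. -/
noncomputable def Ctilde : Set ℂ :=
  {ζ | ζ ≠ 0 ∧ Tendsto (fun n => gex^[n] ζ) atTop (nhds 0)}

open scoped Topology

theorem iterate_smul_self {M X : Type*} [CommMonoid M] [MulAction M X] (u : X → M) (n : ℕ)
    (x : X) :
    (fun y => u y • y)^[n] x =
      (∏ i ∈ Finset.range n, u ((fun y => u y • y)^[i] x)) • x := by
  induction n with
  | zero => simp
  | succ n ih =>
    rw [Function.iterate_succ_apply', Finset.prod_range_succ_comm, mul_smul, ← ih]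

theorem semiconj_smul_self_of_homogeneous {M X Y : Type*} [Monoid M] [SMul M X] [SMul M Y]
    {q : X → Y} {d : ℕ} (hq : ∀ (c : M) (x : X), q (c • x) = c ^ d • q x) (φ : Y → M) :
    Function.Semiconj q (fun x => φ (q x) • x) (fun y => φ y ^ d • y) :=
  fun x => hq (φ (q x)) x

section Limits

variable {ι : Type*} {l : Filter ι}

theorem tendsto_smul_const_nhds_zero_iff {𝕜 E : Type*} [NormedField 𝕜] [NormedAddCommGroup E]
    [NormedSpace 𝕜 E] {c : ι → 𝕜} {x : E} (hx : x ≠ 0) :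
    Tendsto (fun i => c i • x) l (𝓝 0) ↔ Tendsto c l (𝓝 0) := by
  rw [tendsto_zero_iff_norm_tendsto_zero, tendsto_zero_iff_norm_tendsto_zero (f := c)]
  simpa only [norm_smul, zero_mul] using
    tendsto_mul_iff_of_ne_zero (f := fun i => ‖c i‖) (x := 0)
      (tendsto_const_nhds (x := ‖x‖)) (norm_ne_zero_iff.mpr hx)

theorem tendsto_pow_nhds_zero_iff {R : Type*} [SeminormedRing R] [NormOneClass R]
    [NormMulClass R] {c : ι → R} {d : ℕ} (hd : d ≠ 0) :
    Tendsto (fun i => c i ^ d) l (𝓝 0) ↔ Tendsto c l (𝓝 0) := by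
  refine ⟨fun h => ?_, fun h => by simpa only [zero_pow hd] using h.pow d⟩
  rw [NormedAddGroup.tendsto_nhds_zero] at h ⊢
  intro ε hε
  filter_upwards [h (ε ^ d) (pow_pos hε d)] with i hi
  rw [norm_pow] at hi
  exact lt_of_pow_lt_pow_left₀ d hε.le hi

end Limits

section Basin

/-- The basin of attraction of the origin under `f`, with the origin itself removed as in the
definitions of `Ω_F` and `C̃`. -/
def puncturedBasin {E : Type*} [Zero E] [TopologicalSpace E] (f : E → E) : Set E :=
  {x | x ≠ 0 ∧ Tendsto (fun n => f^[n] x) atTop (𝓝 0)}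

variable {𝕜 E G : Type*} [NormedField 𝕜] [NormedAddCommGroup E] [NormedSpace 𝕜 E]
  [NormedAddCommGroup G] [NormedSpace 𝕜 G] {q : E → G} {d : ℕ}

theorem mem_puncturedBasin_smul_self_iff (hq : ∀ (c : 𝕜) (x : E), q (c • x) = c ^ d • q x)
    (hd : d ≠ 0) (φ : G → 𝕜) {x : E} (hqx : q x ≠ 0) :
    x ∈ puncturedBasin (fun x => φ (q x) • x) ↔
      q x ∈ puncturedBasin (fun ζ => φ ζ ^ d • ζ) := by
  let c (n : ℕ) : 𝕜 := ∏ i ∈ Finset.range n, φ (q ((fun y => φ (q y) • y)^[i] x))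
  have orbit (n : ℕ) : (fun y => φ (q y) • y)^[n] x = c n • x :=
    iterate_smul_self (fun y => φ (q y)) n x
  have image_orbit (n : ℕ) : (fun ζ => φ ζ ^ d • ζ)^[n] (q x) = c n ^ d • q x := by
    rw [← ((semiconj_smul_self_of_homogeneous hq φ).iterate_right n).eq, orbit, hq]
  have q_zero : q 0 = 0 := by simpa [hd] using hq 0 0
  have hx : x ≠ 0 := fun h => hqx (h ▸ q_zero)
  refine and_congr (iff_of_true hx hqx) ?_
  simp only [orbit, image_orbit]
  rw [tendsto_smul_const_nhds_zero_iff hx, tendsto_smul_const_nhds_zero_iff hqx,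
    tendsto_pow_nhds_zero_iff hd]

theorem puncturedBasin_smul_self_eq_preimage
    (hq : ∀ (c : 𝕜) (x : E), q (c • x) = c ^ d • q x) (hd : d ≠ 0) {φ : G → 𝕜} (hφ : φ 0 = 1) :
    puncturedBasin (fun x => φ (q x) • x) = q ⁻¹' puncturedBasin (fun ζ => φ ζ ^ d • ζ) := by
  ext x
  by_cases hqx : q x = 0
  · have fixed : Function.IsFixedPt (fun x => φ (q x) • x) x := by
      simp only [Function.IsFixedPt, hqx, hφ, one_smul]
    have not_mem : x ∉ puncturedBasin (fun x => φ (q x) • x) := fun ⟨hx, hlim⟩ =>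
      hx (tendsto_nhds_unique tendsto_const_nhds (hlim.congr fun n => fixed.iterate n))
    exact iff_of_false not_mem fun h => h.1 hqx
  · exact mem_puncturedBasin_smul_self_iff hq hd φ hqx

end Basin

/-- The map `Φ(z, w) = (z, zw)` as a bijection of `{z ≠ 0}` onto itself, with inverse
`(z, ζ) ↦ (z, z⁻¹ ζ)`. -/
def mulShear (G₀ : Type*) [GroupWithZero G₀] : PartialEquiv (G₀ × G₀) (G₀ × G₀) where
  toFun p := (p.1, p.1 * p.2)
  invFun q := (q.1, q.1⁻¹ * q.2)
  source := {p | p.1 ≠ 0}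
  target := {q | q.1 ≠ 0}
  map_source' _ hp := hp
  map_target' _ hq := hq
  left_inv' p hp := Prod.ext rfl (inv_mul_cancel_left₀ hp p.2)
  right_inv' q hq := Prod.ext rfl (mul_inv_cancel_left₀ hq q.2)

theorem differentiableOn_mulShear_symm (𝕜 : Type*) [NontriviallyNormedField 𝕜] :
    DifferentiableOn 𝕜 (mulShear 𝕜).symm (mulShear 𝕜).target :=
  differentiableOn_fst.prodMk ((differentiableOn_fst.inv fun _ hq => hq).mul differentiableOn_snd)

theorem Fex_eq_smul : Fex = fun p => (1 + (1 / 2) * (p.1 * p.2)) • p := by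
  ext p <;> simp only [Fex, Prod.smul_fst, Prod.smul_snd, smul_eq_mul] <;> ring

theorem gex_eq_smul : gex = fun ζ => (1 + (1 / 2) * ζ) ^ 2 • ζ :=
  funext fun _ => mul_comm _ _

theorem basinFex_eq_preimage_Ctilde : basinFex = (fun p => p.1 * p.2) ⁻¹' Ctilde := by
  have mul_homogeneous (c : ℂ) (p : ℂ × ℂ) : (c • p).1 * (c • p).2 = c ^ 2 • (p.1 * p.2) := by
    simp only [Prod.smul_fst, Prod.smul_snd, smul_eq_mul]
    ring
  change puncturedBasin Fex = _ ⁻¹' puncturedBasin gex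
  rw [Fex_eq_smul, gex_eq_smul]
  exact puncturedBasin_smul_self_eq_preimage (φ := fun ζ => 1 + (1 / 2) * ζ) mul_homogeneous
    two_ne_zero (by simp)

theorem basinFex_subset_mulShear_source : basinFex ⊆ (mulShear ℂ).source := by
  rw [basinFex_eq_preimage_Ctilde]
  exact fun _ hp => left_ne_zero_of_mul hp.1

theorem mulShear_isImage_basinFex : (mulShear ℂ).IsImage basinFex (Prod.snd ⁻¹' Ctilde) := by
  rw [basinFex_eq_preimage_Ctilde]
  exact fun _ _ => Iff.rfl

/-- The map `Φ(z, w) = (z, zw)` is a biholomorphism from `Ω_F` onto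
`ℂ* × C̃`: it is injective and holomorphic on `Ω_F`, has holomorphic inverse, and
`Φ(Ω_F) = ℂ* × C̃`; hence `Ω_F` is biholomorphic to `ℂ* × C̃`. -/
theorem basinFex_biholo_Cstar_Ctilde :
    Set.InjOn (fun p : ℂ × ℂ => (p.1, p.1 * p.2)) basinFex ∧
    DifferentiableOn ℂ (fun p : ℂ × ℂ => (p.1, p.1 * p.2)) basinFex ∧
    (fun p : ℂ × ℂ => (p.1, p.1 * p.2)) '' basinFex =
      {q : ℂ × ℂ | q.1 ≠ 0 ∧ q.2 ∈ Ctilde} ∧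
    ∃ Φinv : ℂ × ℂ → ℂ × ℂ,
      DifferentiableOn ℂ Φinv {q : ℂ × ℂ | q.1 ≠ 0 ∧ q.2 ∈ Ctilde} ∧
      (∀ p ∈ basinFex, Φinv (p.1, p.1 * p.2) = p) ∧
      (∀ q ∈ {q : ℂ × ℂ | q.1 ≠ 0 ∧ q.2 ∈ Ctilde},
        ((Φinv q).1, (Φinv q).1 * (Φinv q).2) = q) := by
  have hsource := basinFex_subset_mulShear_source
  have himage : mulShear ℂ '' basinFex = (mulShear ℂ).target ∩ Prod.snd ⁻¹' Ctilde := by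
    rw [← mulShear_isImage_basinFex.image_eq, inter_eq_right.mpr hsource]
  exact ⟨(mulShear ℂ).injOn.mono hsource, by fun_prop, himage, (mulShear ℂ).symm,
    (differentiableOn_mulShear_symm ℂ).mono fun _ hq => hq.1,
    fun _ hp => (mulShear ℂ).left_inv (hsource hp), fun _ hq => (mulShear ℂ).right_inv hq.1⟩
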